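/- arXiv:1311.6257 — 2 statements merged into one kernel-verified Lean document; each statement's English description precedes it below -/
import Mathlib

section
/- Let T > 0, let S ⊆ (0, T] be a finite set of jump times with associated counting path Y(t) = #{τ ∈ S : τ ≤ t}, and let λ : [0, T] → (0, ∞) be measurable, bounded, and continuous at every point of [0, T] ∖ S. Define Z(t) = exp(−∫₀ᵗ (λ(u) − 1) du) · ∏_{τ ∈ S, τ ≤ t} λ(τ), and for τ ∈ S write Z(τ−) = exp(−∫₀^τ (λ(u) − 1) du) · ∏_{τ' ∈ S, τ' < τ} λ(τ'). Then for every t ∈ [0, T], Z(t) = 1 + Σ_{τ ∈ S, τ ≤ t} Z(τ−)(λ(τ) − 1) − ∫₀ᵗ Z(u)(λ(u) − 1) du. (That is, the explicit product–exponential formula solves the stochastic equation Z_t = 1 + ∫_{(0,t]} Z_{u−}(λ_u − 1)(dY_u − du) pathwise.) -/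
open MeasureTheory Finset

/-- The explicit product–exponential solution
`Z(t) = exp(−∫₀ᵗ (λ(u) − 1) du) · ∏_{τ ∈ S, τ ≤ t} λ(τ)`. -/
noncomputable def Zfun (S : Finset ℝ) (lam : ℝ → ℝ) (t : ℝ) : ℝ :=
  Real.exp (-∫ u in (0:ℝ)..t, (lam u - 1)) * ∏ τ ∈ S.filter (· ≤ t), lam τ

/-- The left limit of `Zfun` at a jump time:
`Z(τ−) = exp(−∫₀^τ (λ(u) − 1) du) · ∏_{τ' ∈ S, τ' < τ} λ(τ')`. -/
noncomputable def Zminus (S : Finset ℝ) (lam : ℝ → ℝ) (t : ℝ) : ℝ :=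
  Real.exp (-∫ u in (0:ℝ)..t, (lam u - 1)) * ∏ τ ∈ S.filter (· < t), lam τ

/-!
Expanding the product over the jumps writes `Z = E · P` with `E t = exp (-∫₀ᵗ (λ - 1))` absolutely
continuous and `P t = 1 + ∑_{τ ≤ t} c τ` a step function whose jump at `τ` is
`c τ = (λ τ - 1) ∏_{τ' < τ} λ τ'`, so that `Z(τ-) (λ τ - 1) = c τ * E τ`. Since `-E' = E (λ - 1)`
almost everywhere, `∫₀ᵗ Z (λ - 1) = ∫₀ᵗ (-E') + ∑_{τ ≤ t} c τ ∫_τ^t (-E')`, and the fundamental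
theorem of calculus for absolutely continuous functions evaluates every term.
-/

theorem prod_filter_le_eq_one_add_sum {ι R : Type*} [LinearOrder ι] [CommRing R]
    (s : Finset ι) (f : ι → R) (t : ι) :
    ∏ i ∈ s with i ≤ t, f i =
      1 + ∑ i ∈ s with i ≤ t, (f i - 1) * ∏ j ∈ s with j < i, f j := by
  have hexpand := prod_one_add_ordered (s.filter (· ≤ t)) (f · - 1)
  simp only [add_sub_cancel] at hexpand
  rw [hexpand]
  congr 1
  refine sum_congr rfl fun i hi ↦ ?_
  have hit : i ≤ t := (mem_filter.mp hi).2
  rw [filter_filter]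
  congr 2
  exact filter_congr fun j _ ↦ and_iff_right_of_imp fun hji ↦ hji.le.trans hit

section StepFunction

variable {E : Type*} [NormedAddCommGroup E] {μ : Measure ℝ} {g : ℝ → E} {a t : ℝ}

theorem intervalIntegrable_indicator_Ici (hg : IntervalIntegrable g μ a t) (τ : ℝ) :
    IntervalIntegrable ((Set.Ici τ).indicator g) μ a t :=
  ⟨hg.1.indicator measurableSet_Ici, hg.2.indicator measurableSet_Ici⟩

variable [NormedSpace ℝ E]

theorem sum_filter_le_smul_eq_sum_indicator (S : Finset ℝ) (c : ℝ → ℝ) (g : ℝ → E) (u : ℝ) :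
    (∑ τ ∈ S with τ ≤ u, c τ) • g u = ∑ τ ∈ S, c τ • (Set.Ici τ).indicator g u := by
  simp only [sum_smul, sum_filter, Set.indicator_apply, Set.mem_Ici, ite_smul, smul_ite,
    zero_smul, smul_zero]

theorem intervalIntegrable_sum_filter_le_smul (hg : IntervalIntegrable g μ a t)
    (S : Finset ℝ) (c : ℝ → ℝ) :
    IntervalIntegrable (fun u ↦ (∑ τ ∈ S with τ ≤ u, c τ) • g u) μ a t := by
  simp only [sum_filter_le_smul_eq_sum_indicator]
  have hsum := IntervalIntegrable.sum S fun τ _ ↦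
    (intervalIntegrable_indicator_Ici hg τ).smul (c τ)
  simpa only [sum_fn] using! hsum

variable [NullSingletonClass μ]

theorem intervalIntegral_indicator_Ici {τ : ℝ} (hat : a ≤ t) (haτ : a ≤ τ) :
    ∫ u in a..t, (Set.Ici τ).indicator g u ∂μ = if τ ≤ t then ∫ u in τ..t, g u ∂μ else 0 := by
  have hae : (Set.Ici τ).indicator g =ᵐ[μ] (Set.Ioi τ).indicator g :=
    indicator_ae_eq_of_ae_eq_set Ioi_ae_eq_Ici.symm
  have hIoc : ∫ u in a..t, (Set.Ici τ).indicator g u ∂μ = ∫ u in Set.Ioc τ t, g u ∂μ := by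
    rw [intervalIntegral.integral_of_le hat, integral_congr_ae (ae_restrict_of_ae hae),
      setIntegral_indicator measurableSet_Ioi, Set.Ioc_inter_Ioi, sup_of_le_right haτ]
  split_ifs with hτt
  · rw [hIoc, intervalIntegral.integral_of_le hτt]
  · rw [hIoc, Set.Ioc_eq_empty (by grind), setIntegral_empty]

theorem intervalIntegral_sum_filter_le_smul (hat : a ≤ t) (hg : IntervalIntegrable g μ a t)
    (S : Finset ℝ) (hS : ∀ τ ∈ S, a ≤ τ) (c : ℝ → ℝ) :
    ∫ u in a..t, (∑ τ ∈ S with τ ≤ u, c τ) • g u ∂μ =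
      ∑ τ ∈ S with τ ≤ t, c τ • ∫ u in τ..t, g u ∂μ := by
  simp only [sum_filter_le_smul_eq_sum_indicator]
  have hint (τ : ℝ) : IntervalIntegrable (fun u ↦ c τ • (Set.Ici τ).indicator g u) μ a t :=
    (intervalIntegrable_indicator_Ici hg τ).smul (c τ)
  rw [intervalIntegral.integral_finsetSum fun τ _ ↦ hint τ, sum_filter]
  refine sum_congr rfl fun τ hτ ↦ ?_
  rw [intervalIntegral.integral_smul, intervalIntegral_indicator_Ici hat (hS τ hτ), smul_ite,
    smul_zero]

end StepFunction

section AbsolutelyContinuous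

variable {a b : ℝ}

theorem absolutelyContinuousOnInterval_comp_of_lipschitzOnWith {X Y : Type*}
    [PseudoMetricSpace X] [PseudoMetricSpace Y] {φ : X → Y} {f : ℝ → X} {K : NNReal}
    (hφ : LipschitzOnWith K φ (f '' Set.uIcc a b)) (hf : AbsolutelyContinuousOnInterval f a b) :
    AbsolutelyContinuousOnInterval (φ ∘ f) a b := by
  have hKf := Filter.Tendsto.const_mul (K : ℝ) hf
  rw [mul_zero] at hKf
  refine squeeze_zero' (.of_forall fun _ ↦ sum_nonneg fun _ _ ↦ dist_nonneg) ?_ hKf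
  refine Filter.mem_inf_of_right fun I hI ↦ ?_
  change ∑ i ∈ range I.1, dist (φ (f (I.2 i).1)) (φ (f (I.2 i).2)) ≤
    K * ∑ i ∈ range I.1, dist (f (I.2 i).1) (f (I.2 i).2)
  rw [mul_sum]
  refine sum_le_sum fun i hi ↦ ?_
  exact hφ.dist_le_mul _ (Set.mem_image_of_mem f (hI.1 i hi).1)
    _ (Set.mem_image_of_mem f (hI.1 i hi).2)

theorem absolutelyContinuousOnInterval_comp_of_locallyLipschitz {X Y : Type*}
    [SeminormedAddCommGroup X] [PseudoMetricSpace Y] {φ : X → Y} {f : ℝ → X}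
    (hφ : LocallyLipschitz φ) (hf : AbsolutelyContinuousOnInterval f a b) :
    AbsolutelyContinuousOnInterval (φ ∘ f) a b := by
  have hcompact : IsCompact (f '' Set.uIcc a b) :=
    isCompact_uIcc.image_of_continuousOn hf.continuousOn
  obtain ⟨K, hK⟩ := hφ.locallyLipschitzOn.exists_lipschitzOnWith_of_compact hcompact
  exact absolutelyContinuousOnInterval_comp_of_lipschitzOnWith hK hf

theorem integral_eq_sub_of_ae_hasDerivAt {F F' : ℝ → ℝ}
    (hF : AbsolutelyContinuousOnInterval F a b)
    (hF' : ∀ᵐ x, x ∈ Set.uIcc a b → HasDerivAt F (F' x) x) :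
    ∫ x in a..b, F' x = F b - F a := by
  rw [← hF.integral_deriv_eq_sub]
  refine intervalIntegral.integral_congr_ae ?_
  filter_upwards [hF'] with x hx hxab
  exact (hx (Set.uIoc_subset_uIcc hxab)).deriv.symm

end AbsolutelyContinuous

theorem intervalIntegrable_of_norm_le {E : Type*} [NormedAddCommGroup E] {μ : Measure ℝ}
    [IsLocallyFiniteMeasure μ] {f : ℝ → E} {a b C : ℝ}
    (hf : AEStronglyMeasurable f (μ.restrict (Set.uIoc a b)))
    (hC : ∀ x ∈ Set.uIoc a b, ‖f x‖ ≤ C) : IntervalIntegrable f μ a b :=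
  (intervalIntegrable_const (c := C)).mono_fun' hf
    ((ae_restrict_mem measurableSet_uIoc).mono hC)

/-- The exponential `exp (-∫ₐˣ f)`, the absolutely continuous solution of `y' = -f y`, `y a = 1`.
For `f = λ - 1` and `a = 0` it is the continuous factor of `Zfun` and `Zminus`. -/
noncomputable def expNegIntegral (f : ℝ → ℝ) (a x : ℝ) : ℝ :=
  Real.exp (-∫ u in a..x, f u)

section ExpNegIntegral

variable {f : ℝ → ℝ} {a b p q : ℝ}

theorem expNegIntegral_self (f : ℝ → ℝ) (a : ℝ) : expNegIntegral f a a = 1 := by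
  simp [expNegIntegral]

theorem absolutelyContinuousOnInterval_expNegIntegral (hf : IntervalIntegrable f volume a b) :
    AbsolutelyContinuousOnInterval (expNegIntegral f a) a b :=
  absolutelyContinuousOnInterval_comp_of_locallyLipschitz (φ := Real.exp)
    Real.contDiff_exp.locallyLipschitz
    (hf.absolutelyContinuousOnInterval_intervalIntegral Set.left_mem_uIcc).fun_neg

theorem ae_hasDerivAt_expNegIntegral (hf : IntervalIntegrable f volume a b) :
    ∀ᵐ x, x ∈ Set.uIcc a b →
      HasDerivAt (expNegIntegral f a) (-(expNegIntegral f a x * f x)) x := by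
  filter_upwards [hf.ae_hasDerivAt_integral] with x hx hxab
  rw [← mul_neg]
  exact (hx hxab a Set.left_mem_uIcc).fun_neg.exp

theorem intervalIntegrable_expNegIntegral_mul (hf : IntervalIntegrable f volume a b) :
    IntervalIntegrable (fun x ↦ expNegIntegral f a x * f x) volume a b :=
  hf.continuousOn_mul (absolutelyContinuousOnInterval_expNegIntegral hf).continuousOn

theorem integral_expNegIntegral_mul (hf : IntervalIntegrable f volume a b)
    (hp : p ∈ Set.uIcc a b) (hq : q ∈ Set.uIcc a b) :
    ∫ x in p..q, expNegIntegral f a x * f x = expNegIntegral f a p - expNegIntegral f a q := by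
  have hpq : Set.uIcc p q ⊆ Set.uIcc a b := Set.uIcc_subset_uIcc hp hq
  have hderiv : ∀ᵐ x, x ∈ Set.uIcc p q →
      HasDerivAt (expNegIntegral f a) (-(expNegIntegral f a x * f x)) x := by
    filter_upwards [ae_hasDerivAt_expNegIntegral hf] with x hx hxpq using hx (hpq hxpq)
  have hFTC := integral_eq_sub_of_ae_hasDerivAt
    ((absolutelyContinuousOnInterval_expNegIntegral hf).mono hpq) hderiv
  rw [intervalIntegral.integral_neg] at hFTC
  linarith

theorem integral_expNegIntegral_mul_step_mul (hab : a ≤ b)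
    (hf : IntervalIntegrable f volume a b) (S : Finset ℝ) (hS : ∀ τ ∈ S, a ≤ τ) (c : ℝ → ℝ)
    (k : ℝ) :
    ∫ u in a..b, expNegIntegral f a u * (k + ∑ τ ∈ S with τ ≤ u, c τ) * f u =
      k + ∑ τ ∈ S with τ ≤ b, c τ * expNegIntegral f a τ -
        expNegIntegral f a b * (k + ∑ τ ∈ S with τ ≤ b, c τ) := by
  set E := expNegIntegral f a
  have hEf : IntervalIntegrable (fun u ↦ E u * f u) volume a b :=
    intervalIntegrable_expNegIntegral_mul hf
  have hFTC {τ : ℝ} (haτ : a ≤ τ) (hτb : τ ≤ b) : ∫ u in τ..b, E u * f u = E τ - E b :=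
    integral_expNegIntegral_mul hf (Set.mem_uIcc_of_le haτ hτb) Set.right_mem_uIcc
  calc
    _ = ∫ u in a..b, (k * (E u * f u) + (∑ τ ∈ S with τ ≤ u, c τ) • (E u * f u)) := by
      congr with u; rw [smul_eq_mul]; ring
    _ = k * (∫ u in a..b, E u * f u) +
        ∑ τ ∈ S with τ ≤ b, c τ • ∫ u in τ..b, E u * f u := by
      rw [intervalIntegral.integral_add (hEf.const_mul k)
          (intervalIntegrable_sum_filter_le_smul hEf S c),
        intervalIntegral.integral_const_mul,
        intervalIntegral_sum_filter_le_smul hab hEf S hS c]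
    _ = k * (1 - E b) + ∑ τ ∈ S with τ ≤ b, c τ * (E τ - E b) := by
      rw [hFTC le_rfl hab, show E a = 1 from expNegIntegral_self f a]
      congr 1
      refine sum_congr rfl fun τ hτ ↦ ?_
      rw [hFTC (hS τ (mem_filter.mp hτ).1) (mem_filter.mp hτ).2, smul_eq_mul]
    _ = _ := by
      simp only [mul_sub, sum_sub_distrib, ← sum_mul]
      ring

end ExpNegIntegral

theorem zfun_eq_expNegIntegral_mul (S : Finset ℝ) (lam : ℝ → ℝ) (t : ℝ) :
    Zfun S lam t = expNegIntegral (fun u ↦ lam u - 1) 0 t *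
      (1 + ∑ τ ∈ S with τ ≤ t, (lam τ - 1) * ∏ σ ∈ S with σ < τ, lam σ) := by
  rw [Zfun, expNegIntegral, prod_filter_le_eq_one_add_sum]

theorem zminus_mul_sub_one (S : Finset ℝ) (lam : ℝ → ℝ) (τ : ℝ) :
    Zminus S lam τ * (lam τ - 1) =
      ((lam τ - 1) * ∏ σ ∈ S with σ < τ, lam σ) * expNegIntegral (fun u ↦ lam u - 1) 0 τ := by
  rw [Zminus, expNegIntegral]
  ring

theorem zfun_solves_pathwise_sde_general (S : Finset ℝ) (hS : ∀ τ ∈ S, 0 ≤ τ)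
    (lam : ℝ → ℝ) {t : ℝ} (ht : 0 ≤ t) (hlam : IntervalIntegrable lam volume 0 t) :
    Zfun S lam t =
      1 + (∑ τ ∈ S with τ ≤ t, Zminus S lam τ * (lam τ - 1))
        - ∫ u in (0 : ℝ)..t, Zfun S lam u * (lam u - 1) := by
  have hint : IntervalIntegrable (fun u ↦ lam u - 1) volume 0 t :=
    hlam.sub intervalIntegrable_const
  simp only [zfun_eq_expNegIntegral_mul, zminus_mul_sub_one]
  rw [integral_expNegIntegral_mul_step_mul ht hint S hS]
  ring

/-- The explicit product–exponential formula solves the stochastic equation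
`Z_t = 1 + ∫_{(0,t]} Z_{u−}(λ_u − 1)(dY_u − du)` pathwise, where the `dY` integral
is the sum over jump times in `S` up to `t`. -/
theorem zfun_solves_pathwise_sde
    (T : ℝ) (hT : 0 < T) (S : Finset ℝ) (hS : ∀ τ ∈ S, τ ∈ Set.Ioc (0:ℝ) T)
    (lam : ℝ → ℝ) (hmeas : Measurable lam)
    (hpos : ∀ t ∈ Set.Icc (0:ℝ) T, 0 < lam t)
    (hbdd : ∃ C : ℝ, ∀ t ∈ Set.Icc (0:ℝ) T, |lam t| ≤ C)
    (hcont : ∀ t ∈ Set.Icc (0:ℝ) T, t ∉ (S : Set ℝ) →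
      ContinuousWithinAt lam (Set.Icc (0:ℝ) T) t) :
    ∀ t ∈ Set.Icc (0:ℝ) T,
      Zfun S lam t =
        1 + (∑ τ ∈ S.filter (· ≤ t), Zminus S lam τ * (lam τ - 1))
          - ∫ u in (0:ℝ)..t, Zfun S lam u * (lam u - 1) := by
  intro t ht
  obtain ⟨C, hC⟩ := hbdd
  have hsub : Set.uIoc 0 t ⊆ Set.Icc 0 T :=
    Set.uIoc_of_le ht.1 ▸ Set.Ioc_subset_Icc_self.trans (Set.Icc_subset_Icc_right ht.2)
  exact zfun_solves_pathwise_sde_general S (fun τ hτ ↦ (hS τ hτ).1.le) lam ht.1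
    (intervalIntegrable_of_norm_le hmeas.aestronglyMeasurable fun u hu ↦ hC u (hsub hu))
end

section
/- Fix T > 0, a finite set S ⊆ (0, T], and ℓ : [0, T] → ℝ^N with all components strictly positive, bounded, and continuous at every point of [0, T] ∖ S; write Λ(t) for the diagonal matrix with entries ℓ(t) and Γ(t) for the diagonal matrix with entries Γ_{ii}(t) = exp(−∫₀ᵗ (ℓ_i(s) − 1) ds) · ∏_{τ ∈ S, τ ≤ t} ℓ_i(τ). Then Γ(t) is invertible for every t, the map t ↦ Γ(t)⁻¹ is differentiable at every t ∈ (0, T) ∖ S with derivative (d/dt) Γ(t)⁻¹ = (Λ(t) − I) Γ(t)⁻¹, and at every jump time τ ∈ S one has Γ(τ)⁻¹ = Λ(τ)⁻¹ Γ(τ−)⁻¹, where Γ(τ−) denotes the left limit. (These are the dynamics dΓ_t⁻¹ = (Λ_t − I)Γ_t⁻¹ dt + (Λ_t⁻¹ − I)Γ_{t−}⁻¹ dY_t used to derive the robust filter.) -/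
open MeasureTheory Finset Matrix

attribute [local instance] Matrix.normedAddCommGroup Matrix.normedSpace

/-- `Γ(t)`: the diagonal matrix with entries
`Γ_{ii}(t) = exp(−∫₀ᵗ (ℓ_i(s) − 1) ds) · ∏_{τ ∈ S, τ ≤ t} ℓ_i(τ)`. -/
noncomputable def Gammafun {N : ℕ} (S : Finset ℝ) (ℓ : ℝ → Fin N → ℝ) (t : ℝ) :
    Matrix (Fin N) (Fin N) ℝ :=
  Matrix.diagonal fun i =>
    Real.exp (-∫ s in (0:ℝ)..t, (ℓ s i - 1)) * ∏ τ ∈ S.filter (· ≤ t), ℓ τ i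

/-- The left limit `Γ(t−)`: the diagonal matrix with entries
`exp(−∫₀ᵗ (ℓ_i(s) − 1) ds) · ∏_{τ ∈ S, τ < t} ℓ_i(τ)`. -/
noncomputable def GammafunMinus {N : ℕ} (S : Finset ℝ) (ℓ : ℝ → Fin N → ℝ) (t : ℝ) :
    Matrix (Fin N) (Fin N) ℝ :=
  Matrix.diagonal fun i =>
    Real.exp (-∫ s in (0:ℝ)..t, (ℓ s i - 1)) * ∏ τ ∈ S.filter (· < t), ℓ τ i

open scoped Topology ENNReal

/-!
Near a time `t ∉ S` the product over jumps does not change, so each diagonal entry of `Γ⁻¹` is a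
constant times `exp (∫₀ᵗ (ℓ_i − 1))`, whose logarithmic derivative is `ℓ_i − 1` by the fundamental
theorem of calculus. At a jump time `τ ∈ S` the product gains exactly the factor `ℓ(τ)`, that is
`Γ(τ) = Γ(τ−) Λ(τ)`, and the jump rule follows by inverting.
-/

theorem prod_filter_le_eq_prod_filter_lt_mul {α M : Type*} [LinearOrder α] [CommMonoid M]
    {s : Finset α} {a : α} (ha : a ∈ s) (f : α → M) :
    ∏ x ∈ s with x ≤ a, f x = (∏ x ∈ s with x < a, f x) * f a := by
  have filter_le_eq : s.filter (· ≤ a) = insert a (s.filter (· < a)) := by grind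
  rw [filter_le_eq, prod_insert (by simp), mul_comm]

theorem eventually_filter_le_eq {α : Type*} [LinearOrder α] [TopologicalSpace α]
    [OrderClosedTopology α] {s : Finset α} {a : α} (ha : a ∉ s) :
    ∀ᶠ b in 𝓝 a, s.filter (· ≤ b) = s.filter (· ≤ a) := by
  have same_side : ∀ᶠ b in 𝓝 a, ∀ x ∈ s, (x ≤ b ↔ x ≤ a) := by
    rw [Filter.eventually_all_finset]
    intro x hx
    rcases lt_or_gt_of_ne (ne_of_mem_of_not_mem hx ha) with hxa | hax
    · filter_upwards [eventually_gt_nhds hxa] with b hxb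
      exact iff_of_true hxb.le hxa.le
    · filter_upwards [eventually_lt_nhds hax] with b hbx
      exact iff_of_false hbx.not_ge hax.not_ge
  exact same_side.mono fun _ hb => filter_congr hb

theorem integrableOn_of_continuousOn_diff_of_bounded {α E : Type*} [TopologicalSpace α]
    [MeasurableSpace α] [OpensMeasurableSpace α] [NormedAddCommGroup E]
    [SecondCountableTopologyEither α E] {μ : Measure α} {s t : Set α} {f : α → E} {C : ℝ}
    (hst : MeasurableSet (s \ t)) (hs : μ s ≠ ∞) (ht : μ t = 0)
    (hf : ContinuousOn f (s \ t)) (hC : ∀ x ∈ s \ t, ‖f x‖ ≤ C) :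
    IntegrableOn f s μ := by
  have integrableOn_diff : IntegrableOn f (s \ t) μ :=
    .of_bound (measure_lt_top_of_subset Set.sdiff_subset hs) (hf.aestronglyMeasurable hst) C
      (ae_restrict_of_forall_mem hst hC)
  exact integrableOn_diff.congr_set_ae (sdiff_null_ae_eq_self ht).symm

theorem hasDerivAt_integral_of_integrableOn_Icc {E : Type*} [NormedAddCommGroup E]
    [NormedSpace ℝ E] [CompleteSpace E] {f : ℝ → E} {a b t : ℝ}
    (hf : IntegrableOn f (Set.Icc a b)) (ht : t ∈ Set.Ioo a b) (hft : ContinuousAt f t) :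
    HasDerivAt (fun u => ∫ s in a..u, f s) (f t) t := by
  have intervalIntegrable : IntervalIntegrable f volume a t :=
    (intervalIntegrable_iff_integrableOn_Icc_of_le ht.1.le).2
      (hf.mono_set (Set.Icc_subset_Icc_right ht.2.le))
  exact intervalIntegral.integral_hasDerivAt_right intervalIntegrable
    ⟨_, Icc_mem_nhds ht.1 ht.2, hf.aestronglyMeasurable⟩ hft

theorem hasDerivAt_diagonal {𝕜 n : Type*} [NontriviallyNormedField 𝕜] [Finite n]
    [DecidableEq n] {v : 𝕜 → n → 𝕜} {v' : n → 𝕜} {t : 𝕜} (hv : HasDerivAt v v' t) :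
    HasDerivAt (fun u => diagonal (v u)) (diagonal v') t := by
  have := Fintype.ofFinite n
  refine hasDerivAt_pi.2 fun i => hasDerivAt_pi.2 fun j => ?_
  rcases eq_or_ne i j with rfl | hij
  · simpa only [diagonal_apply_eq] using hasDerivAt_pi.1 hv i
  · simpa only [diagonal_apply_ne _ hij] using hasDerivAt_const t (0 : 𝕜)

/-- The vector `∫₀ᵗ (ℓ(s) − 1) ds` whose negative is the exponent in `Γ(t)`. The integral is taken
entry by entry, so that it agrees with the one in `Gammafun` without integrability assumptions. -/
noncomputable def compensator {ι : Type*} (ℓ : ℝ → ι → ℝ) (t : ℝ) : ι → ℝ :=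
  fun i => ∫ s in (0 : ℝ)..t, (ℓ s i - 1)

theorem hasDerivAt_exp_compensator {ι : Type*} {ℓ : ℝ → ι → ℝ} {T t : ℝ}
    (hℓ_int : ∀ i, IntegrableOn (ℓ · i) (Set.Icc 0 T)) (ht : t ∈ Set.Ioo 0 T)
    (hcont : ContinuousAt ℓ t) :
    HasDerivAt (fun u i => Real.exp (compensator ℓ u i))
      (fun i => Real.exp (compensator ℓ t i) * (ℓ t i - 1)) t := by
  refine hasDerivAt_pi.2 fun i => HasDerivAt.exp ?_
  have integrableOn_sub_one : IntegrableOn (fun s => ℓ s i - 1) (Set.Icc 0 T) :=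
    (hℓ_int i).sub (integrableOn_const measure_Icc_lt_top.ne)
  exact hasDerivAt_integral_of_integrableOn_Icc integrableOn_sub_one ht
    ((continuousAt_pi.1 hcont i).sub continuousAt_const)

section Gammafun

variable {N : ℕ} {S : Finset ℝ} {ℓ : ℝ → Fin N → ℝ}

theorem isUnit_gammafun (hne : ∀ τ ∈ S, ∀ i, ℓ τ i ≠ 0) (t : ℝ) : IsUnit (Gammafun S ℓ t) := by
  refine isUnit_diagonal.2 (Pi.isUnit_iff.2 fun i => IsUnit.mk0 _ ?_)
  exact mul_ne_zero (Real.exp_ne_zero _)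
    (prod_ne_zero_iff.2 fun τ hτ => hne τ (mem_of_mem_filter τ hτ) i)

theorem gammafun_inv (hne : ∀ τ ∈ S, ∀ i, ℓ τ i ≠ 0) (t : ℝ) :
    (Gammafun S ℓ t)⁻¹ =
      diagonal ((fun i => Real.exp (compensator ℓ t i)) * ∏ τ ∈ S with τ ≤ t, (ℓ τ)⁻¹) := by
  refine inv_eq_left_inv ?_
  rw [Gammafun, diagonal_mul_diagonal, ← diagonal_one]
  congr 1 with i
  have jumps_cancel : (∏ τ ∈ S with τ ≤ t, (ℓ τ i)⁻¹) * ∏ τ ∈ S with τ ≤ t, ℓ τ i = 1 := by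
    rw [← prod_mul_distrib]
    exact prod_eq_one fun τ hτ => inv_mul_cancel₀ (hne τ (mem_of_mem_filter τ hτ) i)
  have exp_cancel : Real.exp (compensator ℓ t i) * Real.exp (-compensator ℓ t i) = 1 := by
    rw [← Real.exp_add, add_neg_cancel, Real.exp_zero]
  simp only [Pi.mul_apply, Finset.prod_apply, Pi.inv_apply]
  rw [mul_mul_mul_comm, jumps_cancel, mul_one]
  exact exp_cancel

theorem hasDerivAt_gammafun_inv {T t : ℝ} (hne : ∀ τ ∈ S, ∀ i, ℓ τ i ≠ 0)
    (hℓ_int : ∀ i, IntegrableOn (ℓ · i) (Set.Icc 0 T)) (ht : t ∈ Set.Ioo 0 T) (htS : t ∉ S)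
    (hcont : ContinuousAt ℓ t) :
    HasDerivAt (fun u => (Gammafun S ℓ u)⁻¹)
      ((diagonal (ℓ t) - 1) * (Gammafun S ℓ t)⁻¹) t := by
  have hasDerivAt_constant_jumps := hasDerivAt_diagonal <|
    (hasDerivAt_exp_compensator hℓ_int ht hcont).mul_const (∏ τ ∈ S with τ ≤ t, (ℓ τ)⁻¹)
  have eventually_eq : (fun u => (Gammafun S ℓ u)⁻¹) =ᶠ[𝓝 t] fun u =>
      diagonal ((fun i => Real.exp (compensator ℓ u i)) * ∏ τ ∈ S with τ ≤ t, (ℓ τ)⁻¹) := by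
    filter_upwards [eventually_filter_le_eq htS] with u hu
    rw [gammafun_inv hne, hu]
  refine (hasDerivAt_constant_jumps.congr_of_eventuallyEq eventually_eq).congr_deriv ?_
  rw [gammafun_inv hne, ← diagonal_one, diagonal_sub, diagonal_mul_diagonal]
  congr 1 with i
  simp only [Pi.mul_apply]
  ring

theorem gammafun_eq_gammafunMinus_mul {τ : ℝ} (hτ : τ ∈ S) :
    Gammafun S ℓ τ = GammafunMinus S ℓ τ * diagonal (ℓ τ) := by
  rw [Gammafun, GammafunMinus, diagonal_mul_diagonal]
  congr 1 with i
  rw [prod_filter_le_eq_prod_filter_lt_mul hτ, mul_assoc]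

end Gammafun

theorem gamma_inverse_dynamics_general {N : ℕ} {T : ℝ} {S : Finset ℝ} {ℓ : ℝ → Fin N → ℝ}
    (hne : ∀ τ ∈ S, ∀ i, ℓ τ i ≠ 0)
    (hℓ_int : ∀ i, IntegrableOn (ℓ · i) (Set.Icc 0 T))
    (hcont : ∀ t ∈ Set.Ioo 0 T, t ∉ S → ContinuousAt ℓ t) :
    (∀ t ∈ Set.Icc 0 T, IsUnit (Gammafun S ℓ t)) ∧
    (∀ t ∈ Set.Ioo 0 T, t ∉ S →
      HasDerivAt (fun u => (Gammafun S ℓ u)⁻¹)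
        ((diagonal (ℓ t) - 1) * (Gammafun S ℓ t)⁻¹) t) ∧
    (∀ τ ∈ S, τ ∈ Set.Icc 0 T →
      (Gammafun S ℓ τ)⁻¹ = (diagonal (ℓ τ))⁻¹ * (GammafunMinus S ℓ τ)⁻¹) :=
  ⟨fun t _ => isUnit_gammafun hne t,
    fun t ht htS => hasDerivAt_gammafun_inv hne hℓ_int ht htS (hcont t ht htS),
    fun τ hτ _ => by rw [gammafun_eq_gammafunMinus_mul hτ, Matrix.mul_inv_rev]⟩

/-- Dynamics of `Γ⁻¹` used to derive the robust filter: `Γ(t)` is invertible for all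
`t ∈ [0, T]`, the map `t ↦ Γ(t)⁻¹` has derivative `(Λ(t) − I) Γ(t)⁻¹` at every
`t ∈ (0, T) ∖ S`, and at every jump time `τ ∈ S` one has `Γ(τ)⁻¹ = Λ(τ)⁻¹ Γ(τ−)⁻¹`. -/
theorem gamma_inverse_dynamics
    {N : ℕ} (T : ℝ) (hT : 0 < T) (S : Finset ℝ) (hS : ∀ τ ∈ S, τ ∈ Set.Ioc (0:ℝ) T)
    (ℓ : ℝ → Fin N → ℝ)
    (hpos : ∀ t ∈ Set.Icc (0:ℝ) T, ∀ i, 0 < ℓ t i)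
    (hbdd : ∃ C : ℝ, ∀ t ∈ Set.Icc (0:ℝ) T, ∀ i, |ℓ t i| ≤ C)
    (hcont : ∀ t ∈ Set.Icc (0:ℝ) T, t ∉ (S : Set ℝ) →
      ContinuousWithinAt ℓ (Set.Icc (0:ℝ) T) t) :
    (∀ t ∈ Set.Icc (0:ℝ) T, IsUnit (Gammafun S ℓ t)) ∧
    (∀ t ∈ Set.Ioo (0:ℝ) T, t ∉ (S : Set ℝ) →
      HasDerivAt (fun u => (Gammafun S ℓ u)⁻¹)
        ((Matrix.diagonal (ℓ t) - 1) * (Gammafun S ℓ t)⁻¹) t) ∧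
    (∀ τ ∈ S,
      (Gammafun S ℓ τ)⁻¹ = (Matrix.diagonal (ℓ τ))⁻¹ * (GammafunMinus S ℓ τ)⁻¹) := by
  obtain ⟨C, hC⟩ := hbdd
  have hSIcc : ∀ τ ∈ S, τ ∈ Set.Icc 0 T := fun τ hτ => Set.Ioc_subset_Icc_self (hS τ hτ)
  have hℓ_int : ∀ i, IntegrableOn (ℓ · i) (Set.Icc 0 T) := fun i =>
    integrableOn_of_continuousOn_diff_of_bounded
      (measurableSet_Icc.diff S.measurableSet) measure_Icc_lt_top.ne
      (S.finite_toSet.measure_zero volume)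
      (fun t ht => (continuousWithinAt_pi.1 (hcont t ht.1 ht.2) i).mono Set.sdiff_subset)
      (fun t ht => hC t ht.1 i)
  obtain ⟨isUnit, hasDerivAt, jump⟩ := gamma_inverse_dynamics_general
    (fun τ hτ i => (hpos τ (hSIcc τ hτ) i).ne') hℓ_int
    (fun t ht htS => (hcont t (Set.Ioo_subset_Icc_self ht) htS).continuousAt
      (Icc_mem_nhds ht.1 ht.2))
  exact ⟨isUnit, hasDerivAt, fun τ hτ => jump τ hτ (hSIcc τ hτ)⟩
end
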